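/- arXiv:1910.09145 — 6 statements merged into one kernel-verified Lean document; each statement's English description precedes it below -/
import Mathlib

section
/- For every integer n ≥ 2 and every prime power q, there exists D such that for all d ≥ D, the number of smooth degree d hypersurfaces X in ℙ^n_{𝔽_q} with Aut_{𝔽_q}(X) ≠ {1} is less than q^{C·binom(n+d,d) + (n+1)^2}, where C = 1 − 1/2^n. -/
/-!
Let `T` be the substitution by a non-central `A`, `S_k` the forms of degree `k`,
`N_k = dim S_k = (n+k).choose k`, and `V_k ⊆ S_k` the eigenspace of `T` for a fixed `c ≠ 0`.
The number of hypersurfaces with a nontrivial automorphism is at most the sum of `|V_d|` over all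
`A` and `c`, so it suffices to bound `dim V_d` by `C * N_d` with a constant `C < 3/4`.

Let `e = |GL|` and `u` the product over all `B ∈ GL` of the linear form in the zeroth row of `B`.
It has degree `e` and is fixed by `T`, so `V_{k+e} ∩ u S_k = u V_k`, whence
`dim V_{k+e} + N_k ≤ N_{k+e} + dim V_k`. On the other hand, as `A` is not scalar, some form `m` of
degree `e` is not fixed by `T`; then `m V_k ∩ V_{k+e} = 0`, as `f = m g` with `g ∈ V_k` and
`f ∈ V_{k+e}` would give `T m = m`. Therefore `dim V_k + dim V_{k+e} ≤ N_{k+e}`, and adding,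
`2 dim V_{k+e} ≤ 2 N_{k+e} - N_k`. As `N_k / N_{k+e} → 1`, the dimension of `V_d` is asymptotically
at most `N_d / 2`, while `1 - 1/2^n ≥ 3/4`.
-/


open MvPolynomial

/-- Substitution of variables by the linear forms given by the rows of `A`. -/
noncomputable def substMap {F : Type*} [Field F] {n : ℕ}
    (A : Matrix (Fin (n+1)) (Fin (n+1)) F) :
    MvPolynomial (Fin (n+1)) F →ₗ[F] MvPolynomial (Fin (n+1)) F :=
  (aeval fun k => ∑ l, A k l • X l).toLinearMap

/-- The subspace `P^{A,λ}` of homogeneous degree `d` polynomials with `λ • f = f ∘ A`. -/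
noncomputable def Psub (F : Type*) [Field F] (n d : ℕ)
    (A : Matrix (Fin (n+1)) (Fin (n+1)) F) (lam : F) :
    Submodule F (MvPolynomial (Fin (n+1)) F) :=
  homogeneousSubmodule (Fin (n+1)) F d ⊓
    LinearMap.ker (substMap A - lam • LinearMap.id)

/-- A nonzero homogeneous polynomial is smooth if `f` and its partial derivatives have no
common zero besides the origin over the algebraic closure. -/
def IsSmoothPoly (F : Type*) [Field F] (n : ℕ) (f : MvPolynomial (Fin (n+1)) F) : Prop :=
  ∀ x : Fin (n+1) → AlgebraicClosure F,
    (aeval x f = 0 ∧ ∀ i, aeval x (pderiv i f) = 0) → x = 0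

def SmoothSet (F : Type*) [Field F] (n d : ℕ) : Set (MvPolynomial (Fin (n+1)) F) :=
  {f | f ≠ 0 ∧ f.IsHomogeneous d ∧ IsSmoothPoly F n f}

/-- Nonzero polynomials up to scalar: quotient by the `Fˣ`-scaling action. -/
abbrev HypQuot (F : Type*) [Field F] (n : ℕ) :=
  Quotient (MulAction.orbitRel Fˣ (MvPolynomial (Fin (n+1)) F))

/-- The set `S_{n,d}` of smooth degree `d` hypersurfaces in `ℙⁿ`. -/
def SND (F : Type*) [Field F] (n d : ℕ) : Set (HypQuot F n) :=
  {X | ∃ f ∈ SmoothSet F n d, Quotient.mk _ f = X}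

/-- `PGL_{n+1}(F)`. -/
abbrev PGL (F : Type*) [Field F] (n : ℕ) :=
  GL (Fin (n+1)) F ⧸ Subgroup.center (GL (Fin (n+1)) F)

/-- The automorphisms over `F` of the hypersurface cut out by `f`: classes `[A]` in `PGL`
such that `f ∘ A = λ • f` for some scalar `λ ∈ Fˣ`. -/
def AutSetPoly (F : Type*) [Field F] (n : ℕ) (f : MvPolynomial (Fin (n+1)) F) :
    Set (PGL F n) :=
  {a | ∃ A : GL (Fin (n+1)) F, QuotientGroup.mk A = a ∧
    ∃ c : Fˣ, substMap (A : Matrix (Fin (n+1)) (Fin (n+1)) F) f = (c : F) • f}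

/-- The automorphism group of a hypersurface class. -/
def AutClass (F : Type*) [Field F] (n : ℕ) (X : HypQuot F n) : Set (PGL F n) :=
  {a | ∃ f, Quotient.mk _ f = X ∧ a ∈ AutSetPoly F n f}

/-! ### Spaces of forms and eigenspaces -/

lemma finrank_homogeneousSubmodule_fin (F : Type*) [Field F] (n d : ℕ) :
    Module.finrank F (homogeneousSubmodule (Fin (n+1)) F d) = (n + d).choose d := by
  rw [homogeneousSubmodule_eq_finsupp_supported]
  change Module.finrank F (restrictSupport F {s : Fin (n+1) →₀ ℕ | s.degree = d}) = _
  rw [Module.finrank_eq_nat_card_basis (basisRestrictSupport F _)]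
  have h : {s : Fin (n+1) →₀ ℕ | s.degree = d} =
      ((Finset.univ : Finset (Fin (n+1))).finsuppAntidiag d : Set _) := by
    ext s
    simp [Finsupp.degree_eq_sum]
  rw [h, Nat.card_coe_set_eq, Set.ncard_coe_finset, Finset.card_finsuppAntidiag_nat_eq_choose]
  simp only [Finset.card_univ, Fintype.card_fin]
  congr 1
  omega

instance (F : Type*) [Field F] (n d : ℕ) :
    FiniteDimensional F (homogeneousSubmodule (Fin (n+1)) F d) :=
  Module.Finite.iff_fg.2 (homogeneousSubmodule_fg _ _ d)

instance (F : Type*) [Field F] (n d : ℕ) (A : Matrix (Fin (n+1)) (Fin (n+1)) F) (c : F) :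
    FiniteDimensional F (Psub F n d A c) :=
  Submodule.finiteDimensional_of_le (inf_le_left : Psub F n d A c ≤ homogeneousSubmodule _ F d)

lemma mem_Psub {F : Type*} [Field F] {n d : ℕ} {A : Matrix (Fin (n+1)) (Fin (n+1)) F} {c : F}
    {f : MvPolynomial (Fin (n+1)) F} :
    f ∈ Psub F n d A c ↔ f.IsHomogeneous d ∧ substMap A f = c • f := by
  simp [Psub, sub_eq_zero]

lemma substMap_mul {F : Type*} [Field F] {n : ℕ} (A : Matrix (Fin (n+1)) (Fin (n+1)) F)
    (f g : MvPolynomial (Fin (n+1)) F) :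
    substMap A (f * g) = substMap A f * substMap A g := by
  simp [substMap]

lemma substMap_X {F : Type*} [Field F] {n : ℕ} (A : Matrix (Fin (n+1)) (Fin (n+1)) F)
    (i : Fin (n+1)) : substMap A (X i) = ∑ l, A i l • X l := by
  simp [substMap]

/-! ### An invariant form and a non-invariant form -/

/-- The product over all `B ∈ GL` of the linear form given by the zeroth row of `B`; an
invariant of the whole group. -/
noncomputable def rowProd (F : Type*) [Field F] [Fintype F] (n : ℕ) :
    MvPolynomial (Fin (n+1)) F := by
  classical
  exact ∏ B : GL (Fin (n+1)) F, ∑ l, (B : Matrix (Fin (n+1)) (Fin (n+1)) F) 0 l • X l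

lemma rowProd_isHomogeneous (F : Type*) [Field F] [Fintype F] (n : ℕ) :
    (rowProd F n).IsHomogeneous (Nat.card (GL (Fin (n+1)) F)) := by
  classical
  rw [Nat.card_eq_fintype_card, Fintype.card_eq_sum_ones]
  refine IsHomogeneous.prod _ _ _ fun B _ => IsHomogeneous.sum _ _ _ fun l _ => ?_
  rw [smul_eq_C_mul]
  exact isHomogeneous_C_mul_X _ _

lemma rowProd_ne_zero (F : Type*) [Field F] [Fintype F] (n : ℕ) : rowProd F n ≠ 0 := by
  classical
  refine Finset.prod_ne_zero_iff.2 fun B _ h => ?_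
  have hrow : (B : Matrix (Fin (n+1)) (Fin (n+1)) F) 0 = 0 := by
    funext j
    have := congrArg (eval (Pi.single j 1)) h
    simpa [smul_eval, Pi.single_apply] using this
  have hdet := (Matrix.isUnit_iff_isUnit_det _).1 B.isUnit
  rw [Matrix.det_eq_zero_of_row_eq_zero 0 fun j => congrFun hrow j] at hdet
  simp at hdet

lemma substMap_rowProd {F : Type*} [Field F] [Fintype F] {n : ℕ} (A : GL (Fin (n+1)) F) :
    substMap (A : Matrix (Fin (n+1)) (Fin (n+1)) F) (rowProd F n) = rowProd F n := by
  classical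
  have h : ∀ B : GL (Fin (n+1)) F, substMap (A : Matrix (Fin (n+1)) (Fin (n+1)) F)
      (∑ l, (B : Matrix (Fin (n+1)) (Fin (n+1)) F) 0 l • X l) =
      ∑ l, ((B * A : GL (Fin (n+1)) F) : Matrix (Fin (n+1)) (Fin (n+1)) F) 0 l • X l := by
    intro B
    simp only [map_sum, map_smul, substMap_X, Finset.smul_sum, smul_smul, Units.val_mul,
      Matrix.mul_apply, Finset.sum_smul]
    exact Finset.sum_comm
  unfold rowProd
  have hp : substMap (A : Matrix (Fin (n+1)) (Fin (n+1)) F)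
      (∏ B : GL (Fin (n+1)) F, ∑ l, (B : Matrix (Fin (n+1)) (Fin (n+1)) F) 0 l • X l) =
      ∏ B : GL (Fin (n+1)) F, substMap (A : Matrix (Fin (n+1)) (Fin (n+1)) F)
        (∑ l, (B : Matrix (Fin (n+1)) (Fin (n+1)) F) 0 l • X l) :=
    map_prod (aeval fun k => ∑ l, (A : Matrix (Fin (n+1)) (Fin (n+1)) F) k l • X l) _ _
  rw [hp]
  simp only [h]
  exact Fintype.prod_equiv (Equiv.mulRight A) _ _ fun B => rfl

/-- The forms `X i ^ e * X j` already detect whether a matrix is scalar: if all of them are fixed,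
then `X i * L j = L i * X j` for the images `L i` of the variables. -/
lemma exists_substMap_ne {F : Type*} [Field F] {n : ℕ} {A : GL (Fin (n+1)) F}
    (hA : A ∉ Subgroup.center (GL (Fin (n+1)) F)) (e : ℕ) :
    ∃ m : MvPolynomial (Fin (n+1)) F, m.IsHomogeneous (e + 1) ∧
      substMap (A : Matrix (Fin (n+1)) (Fin (n+1)) F) m ≠ m := by
  by_contra! hfix
  apply hA
  set M : Matrix (Fin (n+1)) (Fin (n+1)) F := A.val with hM
  have hpow : ∀ (i : Fin (n+1)) (k : ℕ),
      substMap M (X i ^ k) = (substMap M (X i)) ^ k := by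
    intro i k
    simp [substMap]
  have hcross : ∀ i j, X i * substMap M (X j) = substMap M (X i) * X j := by
    intro i j
    have h1 := hfix _ (isHomogeneous_X_pow (R := F) i (e + 1))
    have h2 := hfix _ ((isHomogeneous_X_pow (R := F) i e).mul (isHomogeneous_X F j))
    rw [hpow] at h1
    rw [substMap_mul, hpow] at h2
    have hX : (X i : MvPolynomial (Fin (n+1)) F) ^ e ≠ 0 := pow_ne_zero _ (X_ne_zero i)
    apply mul_left_cancel₀ hX
    linear_combination (-substMap M (X j)) * h1 + substMap M (X i) * h2
  have hoff : ∀ i j, i ≠ j → M j i = 0 := by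
    intro i j hij
    have := congrArg (eval (Pi.single i 1)) (hcross i j)
    simpa [substMap_X, smul_eval, Pi.single_apply, hij, hij.symm] using this
  have hdiag : ∀ i j, i ≠ j → M j j = M i i := by
    intro i j hij
    have := congrArg (eval (Pi.single i 1 + Pi.single j 1)) (hcross i j)
    simpa [substMap_X, smul_eval, Pi.single_apply, hij, hij.symm, mul_add, Finset.sum_add_distrib,
      hoff i j hij, hoff j i hij.symm] using this
  rw [Matrix.GeneralLinearGroup.mem_center_iff_val_mem_range_scalar]
  refine ⟨M 0 0, ?_⟩
  ext i j
  by_cases hij : i = j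
  · subst hij
    by_cases hi : i = 0
    · simp [hi, hM]
    · simpa [hM] using hdiag i 0 hi
  · simpa [hij, hM] using (hoff j i (Ne.symm hij)).symm

/-! ### Two inequalities between dimensions of eigenspaces -/

lemma finrank_map_mulLeft {F σ : Type*} [Field F] {u : MvPolynomial σ F} (hu : u ≠ 0)
    (W : Submodule F (MvPolynomial σ F)) :
    Module.finrank F (W.map (LinearMap.mulLeft F u)) = Module.finrank F W :=
  (LinearEquiv.finrank_eq (Submodule.equivMapOfInjective _
    (fun _ _ h => mul_left_cancel₀ hu h) W)).symm

/-- Forms divisible by the invariant `u` have codimension `N_{k+e} - N_k`, and those lying in the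
eigenspace are `u` times an eigenspace of lower degree. -/
lemma finrank_Psub_le_of_invariant {F : Type*} [Field F] {n k e : ℕ}
    {A : Matrix (Fin (n+1)) (Fin (n+1)) F} {c : F} {u : MvPolynomial (Fin (n+1)) F} (hu : u ≠ 0)
    (hue : u.IsHomogeneous e) (huA : substMap A u = u) :
    Module.finrank F (Psub F n (k + e) A c) + (n + k).choose k ≤
      (n + (k + e)).choose (k + e) + Module.finrank F (Psub F n k A c) := by
  set U := (homogeneousSubmodule (Fin (n+1)) F k).map (LinearMap.mulLeft F u)
  have hsup : Psub F n (k + e) A c ⊔ U ≤ homogeneousSubmodule (Fin (n+1)) F (k + e) := by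
    refine sup_le inf_le_left ?_
    rintro _ ⟨g, hg, rfl⟩
    rw [add_comm k e]
    exact hue.mul hg
  have hinf : Psub F n (k + e) A c ⊓ U ≤ (Psub F n k A c).map (LinearMap.mulLeft F u) := by
    rintro _ ⟨hf, g, hg, rfl⟩
    refine ⟨g, mem_Psub.2 ⟨hg, ?_⟩, rfl⟩
    have h := (mem_Psub.1 hf).2
    rw [LinearMap.mulLeft_apply, substMap_mul, huA, ← mul_smul_comm] at h
    exact mul_left_cancel₀ hu h
  have h := Submodule.finrank_sup_add_finrank_inf_eq (Psub F n (k + e) A c) U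
  have h1 := Submodule.finrank_mono hsup
  have h2 := Submodule.finrank_mono hinf
  rw [finrank_map_mulLeft hu] at h2
  rw [finrank_map_mulLeft hu, finrank_homogeneousSubmodule_fin] at h
  rw [finrank_homogeneousSubmodule_fin] at h1
  omega

/-- Multiplication by `m` maps the eigenspace in degree `k` injectively onto a subspace that meets the
eigenspace in degree `k + e` trivially. -/
lemma finrank_Psub_add_le_of_not_invariant {F : Type*} [Field F] {n k e : ℕ}
    {A : Matrix (Fin (n+1)) (Fin (n+1)) F} {c : F} (hc : c ≠ 0)
    {m : MvPolynomial (Fin (n+1)) F}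
    (hme : m.IsHomogeneous e) (hmA : substMap A m ≠ m) :
    Module.finrank F (Psub F n k A c) + Module.finrank F (Psub F n (k + e) A c) ≤
      (n + (k + e)).choose (k + e) := by
  have hm : m ≠ 0 := by
    rintro rfl
    simp at hmA
  set U := (Psub F n k A c).map (LinearMap.mulLeft F m)
  have hsup : U ⊔ Psub F n (k + e) A c ≤ homogeneousSubmodule (Fin (n+1)) F (k + e) := by
    refine sup_le ?_ inf_le_left
    rintro _ ⟨g, hg, rfl⟩
    rw [add_comm k e]
    exact hme.mul (mem_Psub.1 hg).1
  have hinf : U ⊓ Psub F n (k + e) A c = ⊥ := by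
    rw [eq_bot_iff]
    rintro _ ⟨⟨g, hg, rfl⟩, hf⟩
    have h := (mem_Psub.1 hf).2
    rw [LinearMap.mulLeft_apply, substMap_mul, (mem_Psub.1 hg).2, ← mul_smul_comm] at h
    by_cases hg0 : g = 0
    · simp [hg0]
    · exact absurd (mul_right_cancel₀ (smul_ne_zero hc hg0) h) hmA
  have h := Submodule.finrank_sup_add_finrank_inf_eq U (Psub F n (k + e) A c)
  have h1 := Submodule.finrank_mono hsup
  rw [finrank_homogeneousSubmodule_fin] at h1
  rw [finrank_map_mulLeft hm, hinf, finrank_bot] at h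
  omega

/-! ### Asymptotics of binomial coefficients -/

/-- By Pascal's rule each step increases the left side by a binomial coefficient that is largest at
the end of the range. -/
lemma choose_shift_le (n k e : ℕ) :
    (n + 1 + (k + e)).choose (n + 1) ≤
      (n + 1 + k).choose (n + 1) + e * (n + (k + e)).choose n := by
  induction e with
  | zero => simp
  | succ e ih =>
    have h1 : (n + 1 + (k + (e + 1))).choose (n + 1) =
        (n + (k + (e + 1))).choose n + (n + 1 + (k + e)).choose (n + 1) := by
      rw [show n + 1 + (k + (e + 1)) = (n + (k + (e + 1))) + 1 by ring, Nat.choose_succ_succ,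
        show n + (k + (e + 1)) = n + 1 + (k + e) by ring]
    have h2 : (n + (k + e)).choose n ≤ (n + (k + (e + 1))).choose n :=
      Nat.choose_le_choose n (by omega)
    have h3 := Nat.mul_le_mul_left e h2
    rw [h1, add_mul]
    omega

lemma three_choose_le (n k e : ℕ) (hk : 4 * e * (n + 1) ≤ k) :
    3 * (n + 1 + (k + e)).choose (n + 1) ≤ 4 * (n + 1 + k).choose (n + 1) := by
  have h1 := choose_shift_le n k e
  have h2 := Nat.add_one_mul_choose_eq (n + (k + e)) n
  rw [show n + (k + e) + 1 = n + 1 + (k + e) by ring] at h2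
  have h3 : 4 * (e * (n + (k + e)).choose n) ≤ (n + 1 + (k + e)).choose (n + 1) := by
    refine Nat.le_of_mul_le_mul_right ?_ (Nat.succ_pos n)
    change _ * (n + 1) ≤ _ * (n + 1)
    rw [← h2]
    calc 4 * (e * (n + (k + e)).choose n) * (n + 1)
        = (4 * e * (n + 1)) * (n + (k + e)).choose n := by ring
      _ ≤ _ := Nat.mul_le_mul_right _ (by omega)
  omega

/-! ### The dimension bound -/

lemma finrank_Psub_bound (n : ℕ) (hn : 2 ≤ n) (F : Type*) [Field F] [Fintype F] :
    ∃ D : ℕ, ∀ d ≥ D, ∀ A : GL (Fin (n+1)) F, A ∉ Subgroup.center (GL (Fin (n+1)) F) →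
      ∀ c : F, c ≠ 0 →
      4 * (Module.finrank F (Psub F n d A c) + 1) ≤ 3 * (n + d).choose d := by
  set e := Nat.card (GL (Fin (n+1)) F) with he
  have hpos : 0 < e := Nat.card_pos
  refine ⟨4 * e * n + e + 8, fun d hd A hA c hc => ?_⟩
  obtain ⟨k, rfl⟩ : ∃ k, d = k + e := ⟨d - e, by omega⟩
  obtain ⟨m, hme, hmA⟩ := exists_substMap_ne hA (e - 1)
  rw [Nat.sub_add_cancel hpos] at hme
  have h1 := finrank_Psub_le_of_invariant (k := k) (c := c) (rowProd_ne_zero F n)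
    (rowProd_isHomogeneous F n) (substMap_rowProd A)
  have h2 := finrank_Psub_add_le_of_not_invariant (k := k) hc hme hmA
  rw [← he] at h1
  obtain ⟨n, rfl⟩ : ∃ n', n = n' + 1 := ⟨n - 1, by omega⟩
  have h3 := three_choose_le n k e (by omega)
  rw [Nat.choose_symm_add, Nat.choose_symm_add] at h3
  have h4 : 8 ≤ (n + 1 + (k + e)).choose (k + e) := by
    calc 8 ≤ (k + e + 1).choose (k + e) := by rw [Nat.choose_succ_self_right]; omega
      _ ≤ _ := Nat.choose_le_choose _ (by omega)
  omega

/-! ### Counting -/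

/-- A hypersurface with a nontrivial automorphism is cut out by an eigenvector of the substitution
by a non-central matrix. -/
lemma exists_eigenform {F : Type*} [Field F] {n d : ℕ} {X : HypQuot F n} (hX : X ∈ SND F n d)
    (hAut : AutClass F n X ≠ {(1 : PGL F n)}) :
    ∃ (A : GL (Fin (n+1)) F) (c : Fˣ) (f : MvPolynomial (Fin (n+1)) F),
      A ∉ Subgroup.center (GL (Fin (n+1)) F) ∧ f ∈ Psub F n d A c ∧ Quotient.mk _ f = X := by
  obtain ⟨f₀, ⟨-, hf₀, -⟩, hfX⟩ := hX
  have hone : (1 : PGL F n) ∈ AutClass F n X := by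
    refine ⟨f₀, hfX, 1, rfl, 1, ?_⟩
    simp [substMap, Matrix.one_apply, ite_smul]
  obtain ⟨a, ⟨f, hf, A, rfl, c, hc⟩, ha⟩ : ∃ a ∈ AutClass F n X, a ≠ 1 := by
    by_contra! h
    exact hAut (Set.eq_singleton_iff_unique_mem.2 ⟨hone, h⟩)
  refine ⟨A, c, f, fun hA => ha ((QuotientGroup.eq_one_iff A).2 hA), mem_Psub.2 ⟨?_, hc⟩, hf⟩
  obtain ⟨t, rfl⟩ : f ∈ MulAction.orbit Fˣ f₀ := Quotient.exact (hf.trans hfX.symm)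
  exact (homogeneousSubmodule (Fin (n+1)) F d).smul_mem (t : F) hf₀

lemma card_GL_le (F : Type*) [Field F] [Fintype F] (n : ℕ) :
    Nat.card (GL (Fin (n+1)) F) ≤ Fintype.card F ^ (n + 1) ^ 2 := by
  classical
  refine (Nat.card_le_card_of_injective
    (fun A : GL (Fin (n+1)) F => (A : Matrix (Fin (n+1)) (Fin (n+1)) F))
    Units.val_injective).trans_eq ?_
  unfold Matrix
  rw [Nat.card_eq_fintype_card]
  simp [pow_two, pow_mul]

lemma card_nontrivial_aut_le (F : Type*) [Field F] [Fintype F] (n d b : ℕ)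
    (hb : ∀ A : GL (Fin (n+1)) F, A ∉ Subgroup.center (GL (Fin (n+1)) F) → ∀ c : Fˣ,
      Module.finrank F (Psub F n d A (c : F)) ≤ b) :
    Nat.card {X : SND F n d // AutClass F n X.val ≠ {(1 : PGL F n)}} ≤
      Nat.card (GL (Fin (n+1)) F) * Nat.card Fˣ * Fintype.card F ^ b := by
  classical
  let G := {A : GL (Fin (n+1)) F // A ∉ Subgroup.center (GL (Fin (n+1)) F)}
  have (p : G × Fˣ) : Finite (Psub F n d p.1.1 (p.2 : F)) := Module.finite_of_finite F
  choose A c f hA hf hX using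
    fun X : {X : SND F n d // AutClass F n X.val ≠ {(1 : PGL F n)}} =>
      exists_eigenform X.1.2 X.2
  have hinj : Function.Injective fun X =>
      (⟨(⟨A X, hA X⟩, c X), ⟨f X, hf X⟩⟩ :
        Σ p : G × Fˣ, Psub F n d p.1.1 (p.2 : F)) := by
    intro X Y h
    have hfXY : f X = f Y :=
      congrArg (fun z : Σ p : G × Fˣ, Psub F n d p.1.1 (p.2 : F) =>
        (z.2 : MvPolynomial (Fin (n+1)) F)) h
    apply Subtype.ext
    apply Subtype.ext
    rw [← hX X, ← hX Y, hfXY]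
  refine (Nat.card_le_card_of_injective _ hinj).trans ?_
  rw [Nat.card_sigma]
  calc ∑ p : G × Fˣ, Nat.card (Psub F n d p.1.1 (p.2 : F))
      ≤ ∑ _p : G × Fˣ, Fintype.card F ^ b := by
        refine Finset.sum_le_sum fun p _ => ?_
        rw [Module.natCard_eq_pow_finrank (K := F), Nat.card_eq_fintype_card]
        exact Nat.pow_le_pow_right Fintype.card_pos (hb _ p.1.2 _)
    _ = Nat.card G * Nat.card Fˣ * Fintype.card F ^ b := by
        simp [Nat.card_eq_fintype_card]
    _ ≤ _ := by
        gcongr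
        exact Nat.card_le_card_of_injective _ Subtype.val_injective

/-- For every `n ≥ 2` and finite field `𝔽_q`, for all sufficiently large `d`,
the number of smooth degree `d` hypersurfaces `X` in `ℙⁿ` with `Aut_{𝔽_q}(X) ≠ {1}` is less
than `q^{C·binom(n+d,d) + (n+1)²}`, where `C = 1 - 1/2ⁿ`. -/
theorem count_nontrivial_aut_lt (n : ℕ) (hn : 2 ≤ n)
    (F : Type) [Field F] [Fintype F] :
    ∃ D : ℕ, ∀ d ≥ D,
      (Nat.card {X : SND F n d // AutClass F n X.val ≠ {(1 : PGL F n)}} : ℝ) <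
        (Fintype.card F : ℝ) ^
          ((1 - 1 / 2 ^ n) * ((n + d).choose d : ℝ) + ((n : ℝ) + 1) ^ 2) := by
  obtain ⟨D, hD⟩ := finrank_Psub_bound n hn F
  refine ⟨D + 1, fun d hd => ?_⟩
  set N := (n + d).choose d with hN
  set q := Fintype.card F with hq
  have hq1 : 1 < q := Fintype.one_lt_card
  -- The hypothesis `hD` gives `dim + 1 ≤ 3 * N / 4`; the spare unit absorbs the choice of `c`.
  have hcard := card_nontrivial_aut_le F n d (3 * N / 4 - 1) fun A hA c => by
    have := hD d (by omega) A hA c c.ne_zero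
    omega
  have h4 : 4 ≤ 3 * N := by
    have h := Nat.choose_le_choose d (show d + 1 ≤ n + d by omega)
    rw [Nat.choose_succ_self_right] at h
    omega
  have hunits : Nat.card Fˣ < q := by
    rw [Nat.card_units, Nat.card_eq_fintype_card]
    omega
  have hlt : Nat.card {X : SND F n d // AutClass F n X.val ≠ {(1 : PGL F n)}} <
      q ^ (3 * N / 4 + (n + 1) ^ 2) := by
    calc _ ≤ _ := hcard
      _ ≤ q ^ (n + 1) ^ 2 * Nat.card Fˣ * q ^ (3 * N / 4 - 1) := by
        gcongr
        exact card_GL_le F n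
      _ < q ^ (n + 1) ^ 2 * q * q ^ (3 * N / 4 - 1) := by
        gcongr
      _ = q ^ (3 * N / 4 + (n + 1) ^ 2) := by
        rw [← pow_succ, ← pow_add]
        congr 1
        omega
  have hexp : ((3 * N / 4 + (n + 1) ^ 2 : ℕ) : ℝ) ≤
      (1 - 1 / 2 ^ n) * (N : ℝ) + ((n : ℝ) + 1) ^ 2 := by
    have h1 : ((3 * N / 4 : ℕ) : ℝ) ≤ 3 / 4 * N := by
      refine Nat.cast_div_le.trans_eq ?_
      push_cast
      ring
    have h2 : (1 : ℝ) / 2 ^ n ≤ 1 / 4 := by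
      have : (2 : ℝ) ^ 2 ≤ 2 ^ n := pow_le_pow_right₀ (by norm_num) hn
      exact one_div_le_one_div_of_le (by norm_num) (by linarith)
    have h3 : (3 / 4 : ℝ) * N ≤ (1 - 1 / 2 ^ n) * N := by
      gcongr
      linarith
    push_cast
    linarith
  calc (Nat.card {X : SND F n d // AutClass F n X.val ≠ {(1 : PGL F n)}} : ℝ)
      < (q : ℝ) ^ (3 * N / 4 + (n + 1) ^ 2) := by exact_mod_cast hlt
    _ = (q : ℝ) ^ ((3 * N / 4 + (n + 1) ^ 2 : ℕ) : ℝ) := (Real.rpow_natCast _ _).symm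
    _ ≤ _ := Real.rpow_le_rpow_of_exponent_le (by exact_mod_cast hq1.le) hexp
end

section
/- Let n ≥ 1, d ≥ 1, q a prime power, and let A ∈ GL_{n+1}(𝔽_q) be a diagonal matrix with diagonal entries λ_1,…,λ_{n+1} ∈ 𝔽_q^* that are not all equal (i.e., A is not a scalar matrix). Then for every λ ∈ 𝔽_q, 2·dim_{𝔽_q} P^{A,λ} ≤ binom(d+n−1, n−1) + binom(d+n, n). -/
/-!
Since `A` is diagonal, substitution by `A` multiplies the monomial `x^m` by its weight
`Λ^m = ∏ Λ_k ^ m_k`, so `P^{A,λ}` lies in the span of the set `S` of monomials of degree `d` and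
weight `λ` (`substMap_diagonal_monomial`, `support_of_mem_Psub`). It remains to bound `|S|`.

Choose `i`, `j` with `Λ_i ≠ Λ_j`, and let `T` be the set of all monomials of degree `d`. Replacing
one factor `x_i` by `x_j` multiplies the weight by `Λ_j / Λ_i ≠ 1`; hence it maps the members of
`S` divisible by `x_i` injectively into `T \ S`. The members of `S` not divisible by `x_i` are
among the degree `d` monomials `T₀` in the remaining `n` variables. Thus
`|S| ≤ (|T| - |S|) + |T₀|`, that is, `2 |S| ≤ |T| + |T₀|` (`two_mul_card_le`), and counting
`T` and `T₀` by stars and bars gives the two binomial coefficients.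
-/

open MvPolynomial

/-- The eigenvalue of the monomial `x^m` under the diagonal substitution with entries `Λ`. -/
noncomputable def monWeight {F : Type} [Field F] {n : ℕ} (Λ : Fin (n+1) → Fˣ)
    (m : Fin (n+1) →₀ ℕ) : F :=
  m.prod fun k e => (Λ k : F) ^ e

section Weight

variable {F : Type} [Field F] {n : ℕ} (Λ : Fin (n+1) → Fˣ)

lemma monWeight_add_single (m : Fin (n+1) →₀ ℕ) (k : Fin (n+1)) :
    monWeight Λ (m + Finsupp.single k 1) = monWeight Λ m * (Λ k : F) := by
  unfold monWeight
  rw [Finsupp.prod_add_index' (by simp) (by intros; exact pow_add _ _ _)]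
  simp

lemma monWeight_ne_zero (m : Fin (n+1) →₀ ℕ) : monWeight Λ m ≠ 0 :=
  Finset.prod_ne_zero_iff.mpr fun _ _ => pow_ne_zero _ (Units.ne_zero _)

lemma substMap_diagonal_monomial (m : Fin (n+1) →₀ ℕ) (a : F) :
    substMap (Matrix.diagonal fun i => (Λ i : F)) (monomial m a)
      = monomial m (monWeight Λ m * a) := by
  have h : ∀ k, ∑ l, (Matrix.diagonal fun i => (Λ i : F)) k l • (X l : MvPolynomial (Fin (n+1)) F)
      = (C (Λ k : F)) * X k := by
    intro k
    rw [Finset.sum_eq_single k]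
    · simp [smul_eq_C_mul]
    · intro l _ hl
      simp [Matrix.diagonal_apply_ne' _ hl]
    · simp
  simp only [substMap, AlgHom.toLinearMap_apply, aeval_monomial, h, mul_pow, Finsupp.prod_mul]
  rw [monomial_eq (s := m), C_mul, monWeight, Finsupp.prod, Finsupp.prod, Finsupp.prod, map_prod]
  simp only [algebraMap_eq, map_pow]
  ring

lemma coeff_substMap_diagonal (f : MvPolynomial (Fin (n+1)) F) (m : Fin (n+1) →₀ ℕ) :
    coeff m (substMap (Matrix.diagonal fun i => (Λ i : F)) f) = monWeight Λ m * coeff m f := by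
  induction f using MvPolynomial.induction_on' with
  | monomial u a =>
    rw [substMap_diagonal_monomial, coeff_monomial, coeff_monomial]
    split_ifs with h
    · rw [h]
    · simp
  | add p q hp hq => rw [map_add, coeff_add, coeff_add, hp, hq, mul_add]

open Classical in
/-- The exponents of the monomials of degree `d` and weight `lam`; they index a basis of
`P^{A,λ}`. -/
noncomputable def goodExponents (d : ℕ) (lam : F) : Finset (Fin (n+1) →₀ ℕ) :=
  {m ∈ Finset.finsuppAntidiag Finset.univ d | monWeight Λ m = lam}

lemma support_of_mem_Psub {d : ℕ} {lam : F} {f : MvPolynomial (Fin (n+1)) F}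
    (hf : f ∈ Psub F n d (Matrix.diagonal fun i => (Λ i : F)) lam) :
    f.support ⊆ goodExponents Λ d lam := by
  classical
  obtain ⟨h1, h2⟩ := Submodule.mem_inf.mp hf
  intro m hm
  rw [mem_support_iff] at hm
  refine Finset.mem_filter.mpr ⟨Finset.mem_finsuppAntidiag.mpr ⟨?_, Finset.subset_univ _⟩, ?_⟩
  · rw [← Finsupp.degree_eq_sum]
    by_contra hne
    exact hm (((mem_homogeneousSubmodule d f).mp h1).coeff_eq_zero hne)
  · have h3 := congrArg (coeff m) (LinearMap.mem_ker.mp h2)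
    simp only [LinearMap.sub_apply, LinearMap.smul_apply, LinearMap.id_apply, coeff_sub,
      coeff_smul, coeff_substMap_diagonal, coeff_zero, smul_eq_mul] at h3
    exact mul_right_cancel₀ hm (sub_eq_zero.mp h3)

lemma finrank_Psub_le (d : ℕ) (lam : F) :
    Module.finrank F (Psub F n d (Matrix.diagonal fun i => (Λ i : F)) lam)
      ≤ (goodExponents Λ d lam).card := by
  have hle : Psub F n d (Matrix.diagonal fun i => (Λ i : F)) lam
      ≤ restrictSupport F (goodExponents Λ d lam : Set (Fin (n+1) →₀ ℕ)) := fun f hf =>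
    (mem_restrictSupport_iff F).mpr (by exact_mod_cast support_of_mem_Psub Λ hf)
  have b := basisRestrictSupport F (goodExponents Λ d lam : Set (Fin (n+1) →₀ ℕ))
  have : Module.Finite F (restrictSupport F (goodExponents Λ d lam : Set (Fin (n+1) →₀ ℕ))) :=
    Module.Finite.of_basis b
  refine (Submodule.finrank_mono hle).trans_eq ?_
  rw [Module.finrank_eq_card_basis b]
  simp

/-- If `Λ i ≠ Λ j`, replacing a factor `x_i` by `x_j` changes the weight of a monomial. So the
monomials of a fixed weight divisible by `x_i` inject into those of other weights. -/
lemma two_mul_card_le (d : ℕ) (lam : F) {i j : Fin (n+1)} (hij : Λ i ≠ Λ j) :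
    2 * (goodExponents Λ d lam).card ≤
      (Finset.finsuppAntidiag (Finset.univ.erase i) d).card
        + (Finset.finsuppAntidiag (Finset.univ : Finset (Fin (n+1))) d).card := by
  classical
  set S := goodExponents Λ d lam with hS
  set T := Finset.finsuppAntidiag (Finset.univ : Finset (Fin (n+1))) d with hT
  have hST : S ⊆ T := Finset.filter_subset _ _
  have hdecomp : ∀ m : Fin (n+1) →₀ ℕ, m i ≠ 0 →
      m - Finsupp.single i 1 + Finsupp.single i 1 = m := fun m hm =>
    tsub_add_cancel_of_le (Finsupp.single_le_iff.mpr (Nat.one_le_iff_ne_zero.mpr hm))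
  have h0 : {m ∈ S | m i = 0} ⊆ Finset.finsuppAntidiag (Finset.univ.erase i) d := by
    intro m hm
    obtain ⟨hmS, hmi⟩ := Finset.mem_filter.mp hm
    have hmT := (Finset.mem_finsuppAntidiag.mp (hST hmS)).1
    rw [Finset.mem_finsuppAntidiag]
    constructor
    · rw [← hmT, ← Finset.add_sum_erase _ _ (Finset.mem_univ i), hmi, zero_add]
    · intro k hk
      refine Finset.mem_erase.mpr ⟨?_, Finset.mem_univ k⟩
      rintro rfl
      exact Finsupp.mem_support_iff.mp hk hmi
  -- The exchange `x^m ↦ x^m * x_j / x_i` leaves `S` and is injective where `x_i` divides `x^m`.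
  have h1 : ({m ∈ S | m i ≠ 0}).card ≤ (T \ S).card := by
    refine Finset.card_le_card_of_injOn
      (fun m => m - Finsupp.single i 1 + Finsupp.single j 1) ?_ ?_
    · intro m hm
      obtain ⟨hmS, hmi⟩ := Finset.mem_filter.mp (Finset.mem_coe.mp hm)
      have hmT := (Finset.mem_finsuppAntidiag.mp (hST hmS)).1
      have hw : monWeight Λ m = lam := (Finset.mem_filter.mp hmS).2
      have hd := hdecomp m hmi
      set u := m - Finsupp.single i 1
      refine Finset.mem_coe.mpr (Finset.mem_sdiff.mpr ⟨?_, fun hmem => ?_⟩)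
      · rw [hT, Finset.mem_finsuppAntidiag]
        refine ⟨?_, Finset.subset_univ _⟩
        rw [← hmT, ← hd]
        simp [Finset.sum_add_distrib, Finsupp.single_apply]
      · have hw' : monWeight Λ (u + Finsupp.single j 1) = lam := (Finset.mem_filter.mp hmem).2
        rw [← hd, monWeight_add_single, ← hw', monWeight_add_single] at hw
        exact hij (Units.ext (mul_left_cancel₀ (monWeight_ne_zero Λ u) hw))
    · intro m hm m' hm' h
      rw [← hdecomp m (Finset.mem_filter.mp (Finset.mem_coe.mp hm)).2,
        ← hdecomp m' (Finset.mem_filter.mp (Finset.mem_coe.mp hm')).2,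
        add_right_cancel h]
  have h2 := Finset.card_filter_add_card_filter_not (s := S) (fun m => m i = 0)
  simp only [← ne_eq] at h2
  have h3 := Finset.card_sdiff_add_card_eq_card hST
  have h4 := Finset.card_le_card h0
  omega

end Weight

/-- If `A` is a diagonal matrix with invertible diagonal entries that are not
all equal, then `2·dim P^{A,λ} ≤ binom(d+n-1, n-1) + binom(d+n, n)` for every `λ`. -/
theorem dim_Psub_diagonal_le (n d : ℕ) (hn : 1 ≤ n) (hd : 1 ≤ d)
    (F : Type) [Field F] [Fintype F]
    (Λ : Fin (n+1) → Fˣ) (hΛ : ¬ ∀ i j, Λ i = Λ j) (lam : F) :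
    2 * Module.finrank F
        (Psub F n d (Matrix.diagonal fun i => (Λ i : F)) lam) ≤
      (d + n - 1).choose (n - 1) + (d + n).choose n := by
  obtain ⟨i, j, hij⟩ : ∃ i j, Λ i ≠ Λ j := by
    simpa only [not_forall] using hΛ
  refine (Nat.mul_le_mul_left 2 (finrank_Psub_le Λ d lam)).trans
    ((two_mul_card_le Λ d lam hij).trans_eq ?_)
  rw [Finset.card_finsuppAntidiag_nat_eq_choose, Finset.card_finsuppAntidiag_nat_eq_choose,
    Finset.card_erase_of_mem (Finset.mem_univ i), Finset.card_univ, Fintype.card_fin,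
    Nat.choose_symm_of_eq_add (show n + 1 - 1 + d - 1 = d + (n - 1) by omega),
    Nat.choose_symm_of_eq_add (show n + 1 + d - 1 = d + n by omega)]
  congr 2 <;> omega
end

section
/- Let n ≥ 1, d ≥ 0, q a prime power, and let λ_1,…,λ_{n+1} ∈ 𝔽_q^* be elements that are not all equal, and let μ ∈ 𝔽_q. Then 2·#{(j_1,…,j_{n+1}) ∈ ℕ^{n+1} : j_1 + ⋯ + j_{n+1} = d and λ_1^{j_1}·λ_2^{j_2}⋯λ_{n+1}^{j_{n+1}} = μ} ≤ binom(d+n−1, n−1) + binom(d+n, n). -/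
/-!
Let `T` be the set of all tuples of sum `d` and `N ⊆ T` those with product `μ`. Pick `a`, `b` with
`Λ a ≠ Λ b`. Moving one unit from position `a` to position `b` multiplies the product by
`Λ b / Λ a ≠ 1`, so it maps the tuples of `N` with `j a ≠ 0` injectively into `T \ N`; the remaining
tuples of `N` have `j a = 0` and are tuples of sum `d` in `n` variables. Hence
`|N| ≤ (|T| - |N|) + binom(d+n-1, n-1)`, where `|T| = binom(d+n, n)`.
-/

open Finset in
/-- The number of tuples of naturals supported in `s` with sum `d`. -/
lemma card_piAntidiag_eq_choose {k : ℕ} (s : Finset (Fin k)) (d m : ℕ) (hs : #s = m + 1) :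
    #(piAntidiag s d) = (d + m).choose m := by
  have h : #(piAntidiag s d) = #(finsuppAntidiag s d) := by
    rw [finsuppAntidiag, card_map, card_attach]
  rw [h, card_finsuppAntidiag_nat_eq_choose, hs, show m + 1 + d - 1 = d + m by omega,
    Nat.choose_symm_add]

/-- If moving one unit of exponent from `a` to `b` preserves the product, then `Λ a = Λ b`. -/
lemma eq_of_prod_pow_update {ι F : Type*} [Fintype ι] [DecidableEq ι] [Field F] (Λ : ι → Fˣ)
    (a b : ι) (k : ι → ℕ)
    (h : ∏ i, (Λ i : F) ^ (k + Pi.single a 1 : ι → ℕ) i =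
      ∏ i, (Λ i : F) ^ (k + Pi.single b 1 : ι → ℕ) i) : Λ a = Λ b := by
  have key : ∀ c, ∏ i, (Λ i : F) ^ (k + Pi.single c 1 : ι → ℕ) i =
      (∏ i, (Λ i : F) ^ k i) * Λ c := by
    intro c
    simp_rw [Pi.add_apply, pow_add, Finset.prod_mul_distrib]
    congr 1
    simp [Pi.single_apply, pow_ite]
  rw [key, key] at h
  exact Units.ext (mul_left_cancel₀ (Finset.prod_ne_zero_iff.2 fun i _ => by simp) h)

open Finset in
/-- If `λ_1,…,λ_{n+1} ∈ 𝔽_q^*` are not all equal and `μ ∈ 𝔽_q`, then twice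
the number of exponent tuples `(j_1,…,j_{n+1})` with `j_1 + ⋯ + j_{n+1} = d` and
`λ_1^{j_1}⋯λ_{n+1}^{j_{n+1}} = μ` is at most `binom(d+n-1, n-1) + binom(d+n, n)`. -/
theorem card_exponent_tuples_le (n d : ℕ) (hn : 1 ≤ n)
    (F : Type) [Field F] [Fintype F]
    (Λ : Fin (n+1) → Fˣ) (hΛ : ¬ ∀ i j, Λ i = Λ j) (μ : F) :
    2 * Nat.card {j : Fin (n+1) → ℕ //
        (∑ i, j i) = d ∧ (∏ i, (Λ i : F) ^ j i) = μ} ≤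
      (d + n - 1).choose (n - 1) + (d + n).choose n := by
  classical
  push Not at hΛ
  obtain ⟨a, b, hab⟩ := hΛ
  set T := piAntidiag (univ : Finset (Fin (n+1))) d with hT
  set N := T.filter (fun j => (∏ i, (Λ i : F) ^ j i) = μ) with hN
  have hcard : Nat.card {j : Fin (n+1) → ℕ //
      (∑ i, j i) = d ∧ (∏ i, (Λ i : F) ^ j i) = μ} = #N :=
    Nat.subtype_card N (by simp [hN, hT])
  have hTcard : #T = (d + n).choose n := card_piAntidiag_eq_choose _ d n (by simp)
  have hzero : #(N.filter (fun j => j a = 0)) ≤ (d + n - 1).choose (n - 1) := by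
    have h := card_piAntidiag_eq_choose (univ.erase a) d (n - 1)
      (by rw [card_erase_of_mem (mem_univ a)]; simp; omega)
    rw [Nat.add_sub_assoc hn, ← h]
    refine card_le_card fun j hj => ?_
    simp only [hN, hT, mem_filter, mem_piAntidiag] at hj
    rw [mem_piAntidiag]
    obtain ⟨⟨⟨h1, -⟩, -⟩, h0⟩ := hj
    refine ⟨by rw [← h1, ← add_sum_erase univ j (mem_univ a), h0, zero_add], fun i hi => ?_⟩
    refine mem_erase.2 ⟨?_, mem_univ i⟩
    rintro rfl
    exact hi h0
  have hsplit : ∀ j : Fin (n+1) → ℕ, ¬ j a = 0 → j - Pi.single a 1 + Pi.single a 1 = j := by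
    intro j hj
    refine tsub_add_cancel_of_le fun i => ?_
    by_cases h : i = a
    · subst h; simp; omega
    · simp [h]
  have hpos : #(N.filter (fun j => ¬ j a = 0)) ≤
      #(T.filter (fun j => ¬ (∏ i, (Λ i : F) ^ j i) = μ)) := by
    refine card_le_card_of_injOn (fun j => j - Pi.single a 1 + Pi.single b 1) ?_ ?_
    · intro j hj
      simp only [hN, hT, coe_filter, Set.mem_ofPred_eq, mem_filter, mem_piAntidiag] at hj ⊢
      obtain ⟨⟨⟨h1, -⟩, h2⟩, h0⟩ := hj
      refine ⟨⟨?_, fun _ _ => mem_univ _⟩, fun h => hab ?_⟩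
      · rw [← hsplit j h0] at h1
        rw [← h1]
        simp only [Pi.add_apply, sum_add_distrib]
        simp
      · refine eq_of_prod_pow_update Λ a b (j - Pi.single a 1) ?_
        rw [h, hsplit j h0, h2]
    · intro j hj k hk h
      rw [← hsplit j (mem_filter.1 hj).2, ← hsplit k (mem_filter.1 hk).2,
        add_right_cancel h]
  have e1 := card_filter_add_card_filter_not (s := N) (fun j => j a = 0)
  have e2 := card_filter_add_card_filter_not (s := T) (fun j => (∏ i, (Λ i : F) ^ j i) = μ)
  rw [← hN] at e2
  omega
end

section
/- Let F be a field, let n ≥ 1, and work in the polynomial ring F[x_1,…,x_{n+1}]. Let L be a homogeneous polynomial of degree 1, let g be a nonzero polynomial, let r be a positive integer with deg g < r, and let i ∈ {1,…,n+1}. If x_i^r divides L^r·g, then L = c·x_i for some c ∈ F. -/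
/-!
The variable `X i` is prime in the domain `F[x_1,…,x_{n+1}]`. If it did not divide `L`, it would
not divide `L ^ r`, so `X i ^ r ∣ L ^ r * g` would force `X i ^ r ∣ g` and hence `r ≤ deg g`,
which is excluded. So `L = X i * q`, and additivity of the total degree makes `q` a constant
when `L ≠ 0`.
-/

open MvPolynomial

/-- In `F[x_1,…,x_{n+1}]`, if `L` is homogeneous of degree `1`, `g ≠ 0`,
`deg g < r` with `r > 0`, and `x_i^r ∣ L^r·g`, then `L = c·x_i` for some `c ∈ F`. -/
theorem linear_form_of_dvd_pow (F : Type) [Field F] (n : ℕ) (hn : 1 ≤ n)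
    (L g : MvPolynomial (Fin (n+1)) F) (hL : L.IsHomogeneous 1) (hg : g ≠ 0)
    (r : ℕ) (hr : 0 < r) (hdeg : g.totalDegree < r) (i : Fin (n+1))
    (hdvd : (X i) ^ r ∣ L ^ r * g) :
    ∃ c : F, L = C c * X i := by
  by_cases hXL : X i ∣ L
  · obtain ⟨q, rfl⟩ := hXL
    rcases eq_or_ne q 0 with rfl | hq
    · exact ⟨0, by simp⟩
    · have hdegL := hL.totalDegree (mul_ne_zero (X_ne_zero i) hq)
      rw [totalDegree_mul_of_isDomain (X_ne_zero i) hq, totalDegree_X] at hdegL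
      have hq0 : q.totalDegree = 0 := by omega
      refine ⟨q.coeff 0, ?_⟩
      rw [← totalDegree_eq_zero_iff_eq_C.mp hq0, mul_comm]
  · exfalso
    -- `X i` is prime and does not divide `L`, so all of `X i ^ r` must divide `g`.
    have hXg : X i ^ r ∣ g :=
      (X_prime (i := i)).pow_dvd_of_dvd_mul_left r (fun h => hXL ((X_prime (i := i)).dvd_of_dvd_pow h)) hdvd
    obtain ⟨h, rfl⟩ := hXg
    have hh : h ≠ 0 := right_ne_zero_of_mul hg
    rw [totalDegree_mul_of_isDomain (pow_ne_zero r (X_ne_zero i)) hh, totalDegree_X_pow] at hdeg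
    omega
end

section
/- Let q be a prime power, n ≥ 1, d ≥ 1, A ∈ GL_{n+1}(𝔽_q) with entries a_{k,l}, λ ∈ 𝔽_q, i ∈ {1,…,n+1}, and let r be an integer with r > d/2. If there exists a nonzero f ∈ P^{A,λ} divisible by x_i^r, then a_{i,k} = 0 for all k ≠ i. -/
/-!
Write `L = ∑ l, a_{i,l} x_l` for the linear form of the `i`-th row. If `x_i ^ r ∣ f` then
`L ^ r ∣ f ∘ A = λ f`, and `λ ≠ 0` because substitution by an invertible matrix is injective
(`substMap_injective`), so `L ^ r ∣ f`. If `a_{i,k} ≠ 0` for some `k ≠ i`, then the prime `x_i` does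
not divide `L` (`not_X_dvd_rowForm`), hence `x_i ^ r * L ^ r ∣ f`, which forces `2 r ≤ d`.
-/

open MvPolynomial

/-- The linear form given by the `i`-th row of `A`. -/
noncomputable def rowForm {F : Type*} [Field F] {n : ℕ}
    (A : Matrix (Fin (n+1)) (Fin (n+1)) F) (i : Fin (n+1)) : MvPolynomial (Fin (n+1)) F :=
  ∑ l, A i l • X l

theorem substMap_apply {F : Type*} [Field F] {n : ℕ}
    (A : Matrix (Fin (n+1)) (Fin (n+1)) F) (f : MvPolynomial (Fin (n+1)) F) :
    substMap A f = aeval (rowForm A) f := rfl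

theorem substMap_substMap {F : Type*} [Field F] {n : ℕ}
    (A B : Matrix (Fin (n+1)) (Fin (n+1)) F) (f : MvPolynomial (Fin (n+1)) F) :
    substMap B (substMap A f) = substMap (A * B) f := by
  have h : (aeval (rowForm B)).comp (aeval (rowForm A)) = aeval (R := F) (rowForm (A * B)) := by
    apply MvPolynomial.algHom_ext
    intro k
    simp only [AlgHom.comp_apply, aeval_X]
    simp only [rowForm, map_sum, map_smul, aeval_X, Matrix.mul_apply, Finset.smul_sum,
      Finset.sum_smul, smul_smul]
    exact Finset.sum_comm
  exact DFunLike.congr_fun h f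

theorem substMap_one {F : Type*} [Field F] {n : ℕ} (f : MvPolynomial (Fin (n+1)) F) :
    substMap (1 : Matrix (Fin (n+1)) (Fin (n+1)) F) f = f := by
  have h : rowForm (1 : Matrix (Fin (n+1)) (Fin (n+1)) F) = X := by
    funext k
    simp [rowForm, Matrix.one_apply, ite_smul]
  rw [substMap_apply, h, aeval_X_left_apply]

theorem substMap_injective {F : Type*} [Field F] {n : ℕ} (A : GL (Fin (n+1)) F) :
    Function.Injective (substMap (A : Matrix (Fin (n+1)) (Fin (n+1)) F)) := by
  apply Function.LeftInverse.injective
    (g := substMap ((A⁻¹ : GL (Fin (n+1)) F) : Matrix (Fin (n+1)) (Fin (n+1)) F))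
  intro f
  rw [substMap_substMap, ← Units.val_mul, mul_inv_cancel, Units.val_one, substMap_one]

/-- At the `k`-th coordinate point, `x_i` vanishes while the row form takes the value `A i k`. -/
theorem not_X_dvd_rowForm {F : Type*} [Field F] {n : ℕ}
    (A : Matrix (Fin (n+1)) (Fin (n+1)) F) {i k : Fin (n+1)} (hk : k ≠ i) (h : A i k ≠ 0) :
    ¬ X i ∣ rowForm A i := by
  rintro ⟨g, hg⟩
  have := congrArg (eval (Pi.single k (1 : F))) hg
  simp [rowForm, smul_eval, Pi.single_apply, hk.symm] at this
  exact h this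

theorem isHomogeneous_rowForm {F : Type*} [Field F] {n : ℕ}
    (A : Matrix (Fin (n+1)) (Fin (n+1)) F) (i : Fin (n+1)) :
    (rowForm A i).IsHomogeneous 1 :=
  (homogeneousSubmodule (Fin (n+1)) F 1).sum_mem fun l _ =>
    Submodule.smul_mem _ _ (isHomogeneous_X F l)

/-- If `r > d/2` and some nonzero `f ∈ P^{A,λ}` is divisible by `x_i^r`,
then the off-diagonal entries of the `i`-th row of `A` vanish. -/
theorem row_vanishes_of_divisible (F : Type) [Field F] [Fintype F]
    (n d : ℕ) (hn : 1 ≤ n) (hd : 1 ≤ d)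
    (A : GL (Fin (n+1)) F) (lam : F) (i : Fin (n+1)) (r : ℕ) (hr : d < 2 * r)
    (hf : ∃ f ∈ Psub F n d (A : Matrix (Fin (n+1)) (Fin (n+1)) F) lam,
      f ≠ 0 ∧ (X i) ^ r ∣ f) :
    ∀ k, k ≠ i → (A : Matrix (Fin (n+1)) (Fin (n+1)) F) i k = 0 := by
  intro k hk
  by_contra h
  obtain ⟨f, ⟨hdeg, hker⟩, hf0, g, hg⟩ := hf
  have hfA : substMap (A : Matrix (Fin (n+1)) (Fin (n+1)) F) f = lam • f := by
    simpa [LinearMap.mem_ker, sub_eq_zero] using hker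
  have hlam : lam ≠ 0 := by
    rintro rfl
    rw [zero_smul] at hfA
    exact hf0 (substMap_injective A (hfA.trans (map_zero _).symm))
  have hX := not_X_dvd_rowForm (A : Matrix (Fin (n+1)) (Fin (n+1)) F) hk h
  have hhom := isHomogeneous_rowForm (A : Matrix (Fin (n+1)) (Fin (n+1)) F) i
  set L := rowForm (A : Matrix (Fin (n+1)) (Fin (n+1)) F) i with hL
  have hL0 : L ≠ 0 := fun h0 => hX (h0 ▸ dvd_zero _)
  have hLdvd : L ^ r ∣ f := by
    have h1 : L ^ r ∣ lam • f := by
      rw [← hfA, substMap_apply, hg, map_mul, map_pow, aeval_X]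
      exact dvd_mul_right _ _
    have h2 := h1.trans (Dvd.intro_left (C lam⁻¹) rfl)
    rwa [← smul_eq_C_mul, smul_smul, inv_mul_cancel₀ hlam, one_smul] at h2
  obtain ⟨u, hu⟩ := hLdvd
  have hprime : Prime (X i : MvPolynomial (Fin (n+1)) F) := X_prime
  obtain ⟨v, hv⟩ : (X i : MvPolynomial (Fin (n+1)) F) ^ r ∣ u :=
    hprime.pow_dvd_of_dvd_mul_left r (fun hd => hX (hprime.dvd_of_dvd_pow hd))
      (hu ▸ Dvd.intro g hg.symm)
  have hu0 : u ≠ 0 := by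
    rintro rfl
    exact hf0 (by rw [hu, mul_zero])
  have hv0 : v ≠ 0 := by
    rintro rfl
    exact hu0 (by rw [hv, mul_zero])
  have e1 : f.totalDegree = d := IsHomogeneous.totalDegree hdeg hf0
  have e2 : (L ^ r).totalDegree = 1 * r := (hhom.pow r).totalDegree (pow_ne_zero r hL0)
  have e3 : ((X i : MvPolynomial (Fin (n+1)) F) ^ r).totalDegree = r := totalDegree_X_pow i r
  rw [hu, totalDegree_mul_of_isDomain (pow_ne_zero r hL0) hu0, hv,
    totalDegree_mul_of_isDomain (pow_ne_zero r (X_ne_zero i)) hv0, e2, e3] at e1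
  omega
end

section
/- Let n ≥ 2, d ≥ 3 with (n,d) ≠ (2,3),(3,4), and q a prime power. Then |S_{n,d}| ≤ Σ_{X ∈ S_{n,d}} |Aut_{𝔽_q}(X)| ≤ |S_{n,d}| + Σ_{(A,λ)} q^{dim_{𝔽_q} P^{A,λ}}, where the right-hand sum runs over all pairs (A, λ) with A ∈ GL_{n+1}(𝔽_q) not a scalar matrix and λ ∈ 𝔽_q^*. -/
/-!
Every automorphism group contains the identity, so the sum of their orders is `|S_{n,d}|` plus the
number of pairs `(X, a)` with `X` a smooth hypersurface and `a ≠ 1` an automorphism of `X`. This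
gives the lower bound. For the upper bound, `exists_lift` attaches to such a pair a non-scalar
matrix `A` representing `a`, a multiplier `c`, and an equation `f ∈ P^{A,c}` of `X`. The triple
`(A, c, f)` determines `(X, a)`, so the number of pairs is at most the number of triples, which is
`∑ |P^{A,c}| = ∑ q ^ dim P^{A,c}`.
-/

open MvPolynomial

/-- Homogeneous polynomials of fixed degree over a finite field form a finite set, because only
finitely many monomials have that degree. -/
lemma finite_homogeneousSubmodule (F : Type*) [Field F] [Finite F] (m d : ℕ) :
    Finite (homogeneousSubmodule (Fin m) F d) := by
  have : Module.Finite F (homogeneousSubmodule (Fin m) F d) :=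
    Module.Finite.iff_fg.2 (weightedHomogeneousSubmodule_fg F 1 (fun _ => one_ne_zero) d)
  exact Module.finite_of_finite F

instance finite_Psub (F : Type*) [Field F] [Finite F] (n d : ℕ)
    (A : Matrix (Fin (n+1)) (Fin (n+1)) F) (lam : F) : Finite (Psub F n d A lam) :=
  have := finite_homogeneousSubmodule F (n+1) d
  Finite.of_injective _ (Submodule.inclusion_injective
    (inf_le_left : Psub F n d A lam ≤ homogeneousSubmodule (Fin (n+1)) F d))

instance finite_SND (F : Type*) [Field F] [Finite F] (n d : ℕ) : Finite (SND F n d) := by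
  have := finite_homogeneousSubmodule F (n+1) d
  have h : (homogeneousSubmodule (Fin (n+1)) F d : Set (MvPolynomial (Fin (n+1)) F)).Finite :=
    Set.toFinite _
  refine ((h.image (Quotient.mk _)).subset ?_).to_subtype
  rintro _ ⟨f, ⟨-, hf, -⟩, rfl⟩
  exact ⟨f, hf, rfl⟩

/-- Homogeneity does not depend on the chosen equation of a hypersurface. -/
lemma isHomogeneous_of_mem_SND {F : Type*} [Field F] {n d : ℕ}
    {f : MvPolynomial (Fin (n+1)) F}
    (h : (Quotient.mk _ f : HypQuot F n) ∈ SND F n d) : f.IsHomogeneous d := by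
  obtain ⟨g, ⟨-, hg, -⟩, hgf⟩ := h
  obtain ⟨u, hu⟩ := Quotient.exact hgf.symm
  rw [← hu]
  exact (homogeneousSubmodule (Fin (n+1)) F d).smul_mem (u : F) hg

/-- A scalar matrix represents the identity of `PGL`. -/
lemma mk_eq_one_of_scalar {F : Type*} [Field F] {n : ℕ} {A : GL (Fin (n+1)) F} {μ : F}
    (h : (A : Matrix (Fin (n+1)) (Fin (n+1)) F) = μ • 1) : (QuotientGroup.mk A : PGL F n) = 1 := by
  rw [QuotientGroup.eq_one_iff, Subgroup.mem_center_iff]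
  intro B
  ext1
  simp [h]

lemma one_mem_AutClass {F : Type*} [Field F] {n : ℕ} (X : HypQuot F n) :
    (1 : PGL F n) ∈ AutClass F n X := by
  obtain ⟨f, rfl⟩ := Quotient.exists_rep X
  refine ⟨f, rfl, 1, rfl, 1, ?_⟩
  simp [substMap, Matrix.one_apply]

/-- A nontrivial automorphism of a smooth hypersurface is induced by a non-scalar `A` and a
multiplier `c`, together with an equation of the hypersurface lying in `P^{A,c}`. -/
lemma exists_lift {F : Type*} [Field F] {n d : ℕ} {X : HypQuot F n} (hX : X ∈ SND F n d)
    {a : PGL F n} (ha : a ∈ AutClass F n X) (ha1 : a ≠ 1) :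
    ∃ (A : GL (Fin (n+1)) F) (c : Fˣ) (f : MvPolynomial (Fin (n+1)) F),
      (¬∃ μ : F, (A : Matrix (Fin (n+1)) (Fin (n+1)) F) =
        μ • (1 : Matrix (Fin (n+1)) (Fin (n+1)) F)) ∧
      f ∈ Psub F n d (A : Matrix (Fin (n+1)) (Fin (n+1)) F) (c : F) ∧
      (QuotientGroup.mk A : PGL F n) = a ∧ (Quotient.mk _ f : HypQuot F n) = X := by
  obtain ⟨f, rfl, A, rfl, c, hc⟩ := ha
  refine ⟨A, c, f, fun ⟨μ, hμ⟩ => ha1 (mk_eq_one_of_scalar hμ), ⟨?_, ?_⟩, rfl, rfl⟩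
  · exact isHomogeneous_of_mem_SND hX
  · simp [LinearMap.mem_ker, hc]

/-- For `n ≥ 2`, `d ≥ 3` with `(n,d) ≠ (2,3), (3,4)`, over any finite field
`𝔽_q`:
`|S_{n,d}| ≤ Σ_{X ∈ S_{n,d}} |Aut_{𝔽_q}(X)| ≤ |S_{n,d}| + Σ_{(A,λ)} q^{dim P^{A,λ}}`,
the last sum running over non-scalar `A ∈ GL_{n+1}(𝔽_q)` and `λ ∈ 𝔽_q^*`. -/
theorem sum_aut_bounds (n d : ℕ) (hn : 2 ≤ n) (hd : 3 ≤ d)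
    (h1 : ¬(n = 2 ∧ d = 3)) (h2 : ¬(n = 3 ∧ d = 4))
    (F : Type) [Field F] [Fintype F] :
    Nat.card (SND F n d) ≤ (∑ᶠ X : SND F n d, Nat.card (AutClass F n X.val)) ∧
    (∑ᶠ X : SND F n d, Nat.card (AutClass F n X.val)) ≤
      Nat.card (SND F n d) +
        ∑ᶠ p : {p : GL (Fin (n+1)) F × Fˣ //
            ¬∃ μ : F, (p.1 : Matrix (Fin (n+1)) (Fin (n+1)) F) =
              μ • (1 : Matrix (Fin (n+1)) (Fin (n+1)) F)},
          (Fintype.card F) ^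
            Module.finrank F
              (Psub F n d (p.val.1 : Matrix (Fin (n+1)) (Fin (n+1)) F) (p.val.2 : F)) := by
  classical
  have := Fintype.ofFinite (SND F n d)
  have hcard : ∀ X : SND F n d,
      Nat.card (AutClass F n X.val) = 1 + Nat.card {a : AutClass F n X.val // a.val ≠ 1} := by
    intro X
    rw [← Nat.card_congr (Equiv.sumCompl fun a : AutClass F n X.val => a.val = 1), Nat.card_sum]
    congr 1
    have : Unique {a : AutClass F n X.val // a.val = 1} :=
      { default := ⟨⟨1, one_mem_AutClass _⟩, rfl⟩
        uniq := fun a => Subtype.ext (Subtype.ext a.2) }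
    exact Nat.card_unique
  have hsum : (∑ᶠ X : SND F n d, Nat.card (AutClass F n X.val)) = Nat.card (SND F n d) +
      Nat.card (Σ X : SND F n d, {a : AutClass F n X.val // a.val ≠ 1}) := by
    rw [finsum_eq_sum_of_fintype, Nat.card_sigma, Finset.sum_congr rfl fun X _ => hcard X,
      Finset.sum_add_distrib, Finset.sum_const, Finset.card_univ, ← Nat.card_eq_fintype_card,
      smul_eq_mul, mul_one]
  refine ⟨hsum ▸ Nat.le_add_right _ _, ?_⟩
  rw [hsum]
  refine Nat.add_le_add_left ?_ _
  let I := {p : GL (Fin (n+1)) F × Fˣ //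
      ¬∃ μ : F, (p.1 : Matrix (Fin (n+1)) (Fin (n+1)) F) =
        μ • (1 : Matrix (Fin (n+1)) (Fin (n+1)) F)}
  have := Fintype.ofFinite I
  have hpow : (∑ᶠ p : I, (Fintype.card F) ^ Module.finrank F
      (Psub F n d (p.val.1 : Matrix (Fin (n+1)) (Fin (n+1)) F) (p.val.2 : F))) =
      Nat.card (Σ p : I,
        Psub F n d (p.val.1 : Matrix (Fin (n+1)) (Fin (n+1)) F) (p.val.2 : F)) := by
    rw [finsum_eq_sum_of_fintype, Nat.card_sigma]
    refine Finset.sum_congr rfl fun p _ => ?_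
    rw [Module.natCard_eq_pow_finrank (K := F), Nat.card_eq_fintype_card]
  refine le_of_le_of_eq ?_ hpow.symm
  choose A c f hA hf hAa hfX using
    fun z : (Σ X : SND F n d, {a : AutClass F n X.val // a.val ≠ 1}) =>
      exists_lift z.1.2 z.2.1.2 z.2.2
  refine Nat.card_le_card_of_injective
    (fun z => (⟨⟨(A z, c z), hA z⟩, ⟨f z, hf z⟩⟩ : Σ p : I,
        Psub F n d (p.val.1 : Matrix (Fin (n+1)) (Fin (n+1)) F) (p.val.2 : F))) ?_
  intro z w hzw
  -- The second components lie in different subspaces, so they are compared as polynomials.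
  have hAzw : A z = A w := congrArg (fun t => t.1.val.1) hzw
  have hfzw : f z = f w := congrArg (fun t => (t.2 : MvPolynomial (Fin (n+1)) F)) hzw
  have hX : z.1.val = w.1.val := by rw [← hfX z, ← hfX w, hfzw]
  have ha : z.2.1.val = w.2.1.val := by rw [← hAa z, ← hAa w, hAzw]
  obtain ⟨⟨X, hX'⟩, ⟨a, ha'⟩, ha1⟩ := z
  obtain ⟨⟨Y, hY'⟩, ⟨b, hb'⟩, hb1⟩ := w
  dsimp only at hX ha
  subst hX ha
  rfl
end
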